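/- Let k be a field and S a totally ordered set, viewed as a category. Every pointwise finite-dimensional persistence module M : S → Vec_k is isomorphic to a direct sum ⊕_{j ∈ Λ} k_{I_j} of interval modules for a family of intervals I_j ⊆ S. -/

import Mathlib

namespace PMod

variable (k : Type) [Field k]

/-- A persistence module over a preordered set `P` with values in `k`-vector spaces. -/
structure PersistenceModule (P : Type) [Preorder P] where
  V : P → Type
  [addCommGroup : ∀ x, AddCommGroup (V x)]
  [module : ∀ x, Module k (V x)]
  map : ∀ {x y : P}, x ≤ y → (V x →ₗ[k] V y)
  map_refl : ∀ x : P, map (le_refl x) = LinearMap.id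
  map_trans : ∀ {x y z : P} (hxy : x ≤ y) (hyz : y ≤ z),
      map (le_trans hxy hyz) = (map hyz).comp (map hxy)

attribute [instance] PersistenceModule.addCommGroup PersistenceModule.module

variable {k}

/-- A morphism of persistence modules. -/
structure Hom {P : Type} [Preorder P] (M N : PersistenceModule k P) where
  app : ∀ x, M.V x →ₗ[k] N.V x
  natural : ∀ {x y : P} (h : x ≤ y), (N.map h).comp (app x) = (app y).comp (M.map h)

/-- A morphism of persistence modules is an isomorphism iff it is pointwise bijective. -/
def IsIsoHom {P : Type} [Preorder P] {M N : PersistenceModule k P} (f : Hom M N) : Prop :=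
  ∀ x, Function.Bijective (f.app x)

/-- Two persistence modules are isomorphic if there is a pointwise bijective
morphism between them. -/
def Isomorphic {P : Type} [Preorder P] (M N : PersistenceModule k P) : Prop :=
  ∃ f : Hom M N, IsIsoHom f

/-- The direct sum of a family of persistence modules, taken pointwise
(`Π₀` is the finitely supported product, i.e. the direct sum). -/
noncomputable def directSum {P : Type} [Preorder P] {ι : Type}
    (N : ι → PersistenceModule k P) : PersistenceModule k P where
  V x := Π₀ i, (N i).V x
  map {x y} h := DFinsupp.mapRange.linearMap (fun i => (N i).map h)
  map_refl x := by
    have h : (fun i => (N i).map (le_refl x)) =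
        fun i => (LinearMap.id : (N i).V x →ₗ[k] (N i).V x) :=
      funext fun i => (N i).map_refl x
    rw [h]
    exact DFinsupp.mapRange.linearMap_id
  map_trans {x y z} hxy hyz := by
    have h : (fun i => (N i).map (le_trans hxy hyz)) =
        fun i => ((N i).map hyz).comp ((N i).map hxy) :=
      funext fun i => (N i).map_trans hxy hyz
    rw [h]
    exact DFinsupp.mapRange.linearMap_comp _ _

/-- The binary direct sum of two persistence modules, taken pointwise. -/
def sum2 {P : Type} [Preorder P] (M N : PersistenceModule k P) : PersistenceModule k P where
  V x := M.V x × N.V x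
  map h := (M.map h).prodMap (N.map h)
  map_refl x := by
    rw [M.map_refl, N.map_refl]
    exact LinearMap.prodMap_id
  map_trans hxy hyz := by
    rw [M.map_trans hxy hyz, N.map_trans hxy hyz]
    exact (LinearMap.prodMap_comp _ _ _ _).symm

/-- The zero persistence module predicate. -/
def IsZero {P : Type} [Preorder P] (M : PersistenceModule k P) : Prop :=
  ∀ x, ∀ v : M.V x, v = 0

/-- A persistence module is indecomposable if it is nonzero and whenever it is
isomorphic to a direct sum of two modules, one of the summands is zero. -/
def Indecomposable {P : Type} [Preorder P] (M : PersistenceModule k P) : Prop :=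
  ¬ IsZero M ∧ ∀ M' M'' : PersistenceModule k P,
    Isomorphic M (sum2 M' M'') → IsZero M' ∨ IsZero M''

variable (k)

/-- A subset of a preordered set is convex. -/
def IsConvex {P : Type} [Preorder P] (I : Set P) : Prop :=
  ∀ p q r : P, p ≤ q → q ≤ r → p ∈ I → r ∈ I → q ∈ I

open Classical in
/-- The fibre of the interval module `k_I` at `x`: a copy of `k` if `x ∈ I`, else `0`. -/
noncomputable def kMod {P : Type} [Preorder P] (I : Set P) (x : P) : Submodule k k :=
  if x ∈ I then ⊤ else ⊥

/-- The canonical generator of the fibre of the interval module at a point of `I`. -/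
noncomputable def kGen {P : Type} [Preorder P] {I : Set P} {x : P} (hx : x ∈ I) :
    kMod k I x :=
  ⟨1, by simp [kMod, hx]⟩

open Classical in
/-- The structure maps of the interval module. -/
noncomputable def intervalMap {P : Type} [Preorder P] (I : Set P) {x y : P} (_ : x ≤ y) :
    kMod k I x →ₗ[k] kMod k I y where
  toFun m := if hy : y ∈ I then ⟨(m : k), by simp [kMod, hy]⟩ else 0
  map_add' a b := by
    by_cases hy : y ∈ I <;> simp [hy]
  map_smul' c a := by
    by_cases hy : y ∈ I <;> simp [hy]

theorem kMod_coe_eq_zero {P : Type} [Preorder P] {I : Set P} {x : P} (hx : x ∉ I)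
    (m : kMod k I x) : (m : k) = 0 := by
  have hm := m.2
  simp only [kMod, if_neg hx, Submodule.mem_bot] at hm
  exact hm

/-- The interval module `k_I` of a convex subset `I ⊆ P`: one-dimensional with
identity structure maps on `I`, and zero outside of `I`. -/
noncomputable def intervalModule {P : Type} [Preorder P] (I : Set P) (hI : IsConvex I) :
    PersistenceModule k P where
  V x := kMod k I x
  map h := intervalMap k I h
  map_refl x := by
    ext m
    by_cases hx : x ∈ I
    · simp [intervalMap, hx]
    · simp [intervalMap, hx, kMod_coe_eq_zero k hx m]
  map_trans {x y z} hxy hyz := by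
    ext m
    by_cases hz : z ∈ I
    · by_cases hy : y ∈ I
      · simp [intervalMap, hz, hy]
      · have hx : x ∉ I := fun hx => hy (hI x y z hxy hyz hx hz)
        simp [intervalMap, hz, hy, kMod_coe_eq_zero k hx m]
    · by_cases hy : y ∈ I <;> simp [intervalMap, hz, hy]

/-- The constant persistence module `k_P` with value `k` everywhere. -/
def constModule (P : Type) [Preorder P] : PersistenceModule k P where
  V _ := k
  map _ := LinearMap.id
  map_refl _ := rfl
  map_trans _ _ := rfl

variable {k}

/-- Connectedness of a subset of a preordered set: any two points are joined by
a finite zigzag of comparable points inside the subset. -/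
def IsConn {P : Type} [Preorder P] (I : Set P) : Prop :=
  ∀ p ∈ I, ∀ q ∈ I, ∃ (n : ℕ) (r : ℕ → P), r 0 = p ∧ r n = q ∧ (∀ i ≤ n, r i ∈ I) ∧
    ∀ i < n, r i ≤ r (i + 1) ∨ r (i + 1) ≤ r i

/-- An interval in a poset: a nonempty convex connected subset. -/
def IsInterval {P : Type} [Preorder P] (I : Set P) : Prop :=
  I.Nonempty ∧ IsConvex I ∧ IsConn I

/-- An ideal: a subset closed under going down. -/
def IsIdeal {P : Type} [Preorder P] (I : Set P) : Prop :=
  ∀ p q : P, p ≤ q → q ∈ I → p ∈ I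

/-- A filter: a subset closed under going up. -/
def IsFilter {P : Type} [Preorder P] (I : Set P) : Prop :=
  ∀ p q : P, p ≤ q → p ∈ I → q ∈ I

/-- An interval in a totally ordered set: a nonempty convex subset. -/
def IsIntervalLin {P : Type} [Preorder P] (I : Set P) : Prop :=
  I.Nonempty ∧ IsConvex I

theorem IsConvex.prod {S T : Type} [Preorder S] [Preorder T] {A : Set S} {B : Set T}
    (hA : IsConvex A) (hB : IsConvex B) : IsConvex (A ×ˢ B) := by
  intro p q r hpq hqr hp hr
  exact ⟨hA _ _ _ hpq.1 hqr.1 hp.1 hr.1, hB _ _ _ hpq.2 hqr.2 hp.2 hr.2⟩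

theorem isConvex_univ {P : Type} [Preorder P] : IsConvex (Set.univ : Set P) :=
  fun _ _ _ _ _ _ _ => trivial

/-- A block in the product of two totally ordered sets. -/
def IsBlock {S T : Type} [LinearOrder S] [LinearOrder T] (I : Set (S × T)) : Prop :=
  I.Nonempty ∧ (
    (∃ JS JT, IsIntervalLin JS ∧ IsIdeal JS ∧ IsIntervalLin JT ∧ IsIdeal JT ∧ I = JS ×ˢ JT) ∨
    (∃ JS JT, IsIntervalLin JS ∧ IsFilter JS ∧ IsIntervalLin JT ∧ IsFilter JT ∧ I = JS ×ˢ JT) ∨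
    (∃ JS, IsIntervalLin JS ∧ I = JS ×ˢ (Set.univ : Set T)) ∨
    (∃ JT, IsIntervalLin JT ∧ I = (Set.univ : Set S) ×ˢ JT))

theorem IsBlock.isConvex {S T : Type} [LinearOrder S] [LinearOrder T] {I : Set (S × T)}
    (h : IsBlock I) : IsConvex I := by
  obtain ⟨-, h | h | h | h⟩ := h
  · obtain ⟨JS, JT, hS, -, hT, -, rfl⟩ := h
    exact hS.2.prod hT.2
  · obtain ⟨JS, JT, hS, -, hT, -, rfl⟩ := h
    exact hS.2.prod hT.2
  · obtain ⟨JS, hS, rfl⟩ := h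
    exact hS.2.prod isConvex_univ
  · obtain ⟨JT, hT, rfl⟩ := h
    exact isConvex_univ.prod hT.2

/-- Convexity is inherited by preimages in a subposet. -/
theorem IsConvex.preimage {P : Type} [Preorder P] {J : Set P} (hJ : IsConvex J)
    (Q : Set P) : IsConvex {p : Q | (p : P) ∈ J} :=
  fun p q r hpq hqr hp hr => hJ p q r hpq hqr hp hr

/-- The restriction of a persistence module to a subposet. -/
def restrict {P : Type} [Preorder P] (M : PersistenceModule k P) (Q : Set P) :
    PersistenceModule k Q where
  V q := M.V q
  map h := M.map h
  map_refl q := M.map_refl q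
  map_trans hxy hyz := M.map_trans hxy hyz

/-- Middle exactness for persistence modules over a product of two totally ordered sets:
for every rectangle `a = (x,y) ≤ b = (x,y'), c = (x',y) ≤ d = (x',y')` the sequence
`M_a → M_b ⊕ M_c → M_d` is exact at `M_b ⊕ M_c`. -/
def MiddleExact {S T : Type} [Preorder S] [Preorder T]
    (M : PersistenceModule k (S × T)) : Prop :=
  ∀ (x x' : S) (y y' : T) (hx : x ≤ x') (hy : y ≤ y')
    (mb : M.V (x, y')) (mc : M.V (x', y)),
    M.map (show (x, y') ≤ (x', y') from ⟨hx, le_refl y'⟩) mb =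
      M.map (show (x', y) ≤ (x', y') from ⟨le_refl x', hy⟩) mc →
    ∃ ma : M.V (x, y),
      M.map (show (x, y) ≤ (x, y') from ⟨le_refl x, hy⟩) ma = mb ∧
      M.map (show (x, y) ≤ (x', y) from ⟨hx, le_refl y⟩) ma = mc


theorem IsIdeal.isConvex {P : Type} [Preorder P] {I : Set P} (h : IsIdeal I) : IsConvex I :=
  fun _ q r _ hqr _ hr => h q r hqr hr

theorem IsFilter.isConvex {P : Type} [Preorder P] {I : Set P} (h : IsFilter I) : IsConvex I :=
  fun p q _ hpq _ hp _ => h p q hpq hp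


/-- Convexity of the preimage of a convex subset of `T` in a subposet of `S × T`. -/
theorem IsConvex.preimageSnd {S T : Type} [Preorder S] [Preorder T] {J : Set T}
    (hJ : IsConvex J) (Q : Set (S × T)) : IsConvex {p : ↥Q | (p : S × T).2 ∈ J} :=
  fun p q r hpq hqr hp hr =>
    hJ _ _ _ (Subtype.coe_le_coe.mpr hpq).2 (Subtype.coe_le_coe.mpr hqr).2 hp hr

end PMod

/-!
By Zorn's lemma it suffices to split an interval module off every nonzero pointwise
finite-dimensional module `M`. Fix an index `x` with `M.V x ≠ 0`. The kernels of the maps out of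
`M.V x` form a chain, and so do the images of the maps into it. Choose `v ≠ 0` lying in each nonzero
kernel, and a functional `φ` with `φ v = 1` that kills every image avoiding `v`. Let `I` be the set
of indices at which `v` is alive. Along `I`, the vector `v` extends to a section of `M` and `φ` to a
compatible family of functionals, and both extend by zero to morphisms `k_I → M` and `M → k_I`,
whose composite is the identity because `φ v = 1`. The functional extends along a direct system
because it factors through the colimit; lifting `v` along an inverse system is the dual statement.
-/

namespace PMod

section LinearAlgebra

theorem exists_isLeast_of_isChain {α : Type*} [PartialOrder α] [WellFoundedLT α] {s : Set α}
    (hs : IsChain (· ≤ ·) s) (hne : s.Nonempty) : ∃ a, IsLeast s a := by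
  obtain ⟨a, ha⟩ := exists_minimal_of_wellFoundedLT (· ∈ s) hne
  exact ⟨a, ha.prop, fun b hb => (hs.total ha.prop hb).elim id (ha.le_of_le hb)⟩

theorem exists_ne_zero_forall_eq_bot_or_mem {R V : Type*} [Ring R] [AddCommGroup V] [Module R V]
    [IsArtinian R V] [Nontrivial V] {𝓤 : Set (Submodule R V)} (h𝓤 : IsChain (· ≤ ·) 𝓤) :
    ∃ v : V, v ≠ 0 ∧ ∀ U ∈ 𝓤, U = ⊥ ∨ v ∈ U := by
  obtain ⟨U₀, ⟨-, hU₀⟩, hU₀_le⟩ := exists_isLeast_of_isChain (s := {U ∈ insert ⊤ 𝓤 | U ≠ ⊥})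
    ((h𝓤.insert fun _ _ _ => .inr le_top).mono (Set.sep_subset _ _))
    ⟨⊤, Set.mem_insert _ _, top_ne_bot⟩
  obtain ⟨v, hvU₀, hv⟩ := Submodule.exists_mem_ne_zero_of_ne_bot hU₀
  exact ⟨v, hv, fun U hU => or_iff_not_imp_left.2 fun hU_ne =>
    hU₀_le ⟨Set.mem_insert_of_mem _ hU, hU_ne⟩ hvU₀⟩

theorem exists_dual_forall_mem_or_le_ker {K V : Type*} [DivisionRing K] [AddCommGroup V]
    [Module K V] {𝓦 : Set (Submodule K V)} (h𝓦 : IsChain (· ≤ ·) 𝓦) {v : V} (hv : v ≠ 0) :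
    ∃ φ : V →ₗ[K] K, φ v = 1 ∧ ∀ W ∈ 𝓦, v ∈ W ∨ W ≤ LinearMap.ker φ := by
  let A := sSup (insert ⊥ {W ∈ 𝓦 | v ∉ W})
  have hvA : v ∉ A := by
    rw [Submodule.mem_sSup_of_directed (Set.insert_nonempty _ _)
      ((h𝓦.mono (Set.sep_subset _ _)).insert fun _ _ _ => .inl bot_le).directedOn]
    rintro ⟨W, rfl | hW, hvW⟩
    exacts [hv ((Submodule.mem_bot K).1 hvW), hW.2 hvW]
  obtain ⟨φ, hφA, hφv⟩ := LinearMap.exists_extend_of_notMem (0 : A →ₗ[K] K) hvA 1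
  refine ⟨φ, hφv, fun W hW => or_iff_not_imp_left.2 fun hvW w hw => ?_⟩
  have hWA : W ≤ A := le_sSup (Set.mem_insert_of_mem _ ⟨hW, hvW⟩)
  exact LinearMap.congr_fun hφA ⟨w, hWA hw⟩

section ToDFinsupp

variable {R ι V : Type*} {W : ι → Type*} [Semiring R] [AddCommMonoid V] [Module R V]
  [∀ i, AddCommMonoid (W i)] [∀ i, Module R (W i)]
  (f : ∀ i, V →ₗ[R] W i) (hf : ∀ v, {i | f i v ≠ 0}.Finite)

open Classical in
theorem mk_toFinset_apply (v : V) (i : ι) :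
    DFinsupp.mk (hf v).toFinset (fun j => f j v) i = f i v := by
  by_cases hi : f i v = 0 <;> simp [DFinsupp.mk_apply, hi]

open Classical in
/-- The linear map into a direct sum of modules induced by a family of linear maps that is locally
finite: at every vector only finitely many members are nonzero. -/
noncomputable def toDFinsupp : V →ₗ[R] Π₀ i, W i where
  toFun v := DFinsupp.mk (hf v).toFinset fun i => f i v
  map_add' v w := DFinsupp.ext fun i => by
    rw [DFinsupp.add_apply, mk_toFinset_apply, mk_toFinset_apply, mk_toFinset_apply, map_add]
  map_smul' c v := DFinsupp.ext fun i => by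
    rw [RingHom.id_apply, DFinsupp.smul_apply, mk_toFinset_apply, mk_toFinset_apply, map_smul]

theorem toDFinsupp_apply_apply (v : V) (i : ι) : toDFinsupp f hf v i = f i v := by
  classical exact mk_toFinset_apply f hf v i

end ToDFinsupp

end LinearAlgebra

variable {k : Type} [Field k] {P : Type} [Preorder P]

namespace PersistenceModule

variable (M : PersistenceModule k P)

theorem map_self_apply {x : P} (h : x ≤ x) (m : M.V x) : M.map h m = m :=
  LinearMap.congr_fun (M.map_refl x) m

theorem map_map_apply {x y z : P} (hxy : x ≤ y) (hyz : y ≤ z) (m : M.V x) :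
    M.map hyz (M.map hxy m) = M.map (hxy.trans hyz) m :=
  (LinearMap.congr_fun (M.map_trans hxy hyz) m).symm

instance : DirectedSystem M.V fun _ _ h => M.map h where
  map_self _ := M.map_self_apply le_rfl
  map_map _ _ _ := M.map_map_apply

theorem ker_map_mono {x y z : P} (hxy : x ≤ y) (hyz : y ≤ z) :
    LinearMap.ker (M.map hxy) ≤ LinearMap.ker (M.map (hxy.trans hyz)) := by
  rw [M.map_trans hxy hyz]
  exact LinearMap.ker_le_ker_comp _ _

theorem range_map_mono {x y z : P} (hxy : x ≤ y) (hyz : y ≤ z) :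
    LinearMap.range (M.map (hxy.trans hyz)) ≤ LinearMap.range (M.map hyz) := by
  rw [M.map_trans hxy hyz]
  exact LinearMap.range_comp_le_range _ _

theorem isChain_ker_map [Std.Total (α := P) (· ≤ ·)] (x : P) :
    IsChain (· ≤ ·) {U | ∃ (y : P) (h : x ≤ y), LinearMap.ker (M.map h) = U} := by
  rintro _ ⟨y, hy, rfl⟩ _ ⟨z, hz, rfl⟩ -
  exact (total_of (· ≤ ·) y z).imp (M.ker_map_mono hy) (M.ker_map_mono hz)

theorem isChain_range_map [Std.Total (α := P) (· ≤ ·)] (x : P) :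
    IsChain (· ≤ ·) {W | ∃ (y : P) (h : y ≤ x), LinearMap.range (M.map h) = W} := by
  rintro _ ⟨y, hy, rfl⟩ _ ⟨z, hz, rfl⟩ -
  exact (total_of (· ≤ ·) y z).imp (M.range_map_mono · hz) (M.range_map_mono · hy)

/-- The pointwise dual of a persistence module, a persistence module over the opposite order. It
turns statements about extending functionals into statements about lifting vectors. -/
def dual : PersistenceModule k Pᵒᵈ where
  V x := Module.Dual k (M.V (OrderDual.ofDual x))
  map h := (M.map (OrderDual.ofDual_le_ofDual.2 h)).dualMap
  map_refl x := by rw [M.map_refl, LinearMap.dualMap_id]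
  map_trans hxy hyz := by
    rw [M.map_trans (OrderDual.ofDual_le_ofDual.2 hyz) (OrderDual.ofDual_le_ofDual.2 hxy),
      LinearMap.dualMap_comp_dualMap]

/- Functionals on the directed system are functionals on its colimit, and the kernel of the map
from `M.V x` to the colimit is the union of the kernels of the structure maps. -/
theorem exists_dual_extension [IsDirectedOrder P] {x : P} (φ : Module.Dual k (M.V x))
    (hφ : ∀ (y : P) (h : x ≤ y), LinearMap.ker (M.map h) ≤ LinearMap.ker φ) :
    ∃ g : ∀ y, Module.Dual k (M.V y), g x = φ ∧
      ∀ (y z : P) (h : y ≤ z), g z ∘ₗ M.map h = g y := by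
  classical
  have : Nonempty P := ⟨x⟩
  let toColim := Module.DirectLimit.of k P M.V fun _ _ h => M.map h
  obtain ⟨G, hG⟩ : φ ∈ LinearMap.range (toColim x).dualMap := by
    rw [LinearMap.range_dualMap_eq_dualAnnihilator_ker, Submodule.mem_dualAnnihilator]
    intro m hm
    obtain ⟨y, h, hy⟩ := Module.DirectLimit.of.zero_exact (LinearMap.mem_ker.1 hm)
    exact hφ y h hy
  exact ⟨fun y => G ∘ₗ toColim y, hG, fun y z h =>
    LinearMap.ext fun m => congrArg G Module.DirectLimit.of_f⟩

theorem exists_section [IsCodirectedOrder P] (hM : ∀ x, FiniteDimensional k (M.V x)) {x : P}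
    (v : M.V x) (hv : ∀ (y : P) (h : y ≤ x), v ∈ LinearMap.range (M.map h)) :
    ∃ s : ∀ y, M.V y, s x = v ∧ ∀ (y z : P) (h : y ≤ z), M.map h (s y) = s z := by
  obtain ⟨g, hgx, hg⟩ : ∃ g : ∀ y, Module.Dual k (Module.Dual k (M.V y)),
      g x = Module.Dual.eval k (M.V x) v ∧
        ∀ (y z : P) (h : y ≤ z) (ψ : Module.Dual k (M.V z)), g y (ψ ∘ₗ M.map h) = g z ψ := by
    obtain ⟨g, hgx, hg⟩ := M.dual.exists_dual_extension (x := OrderDual.toDual x)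
      (Module.Dual.eval k (M.V x) v) fun y h ψ hψ => by
        obtain ⟨w, rfl⟩ := hv (OrderDual.ofDual y) h
        exact LinearMap.congr_fun hψ w
    exact ⟨fun y => g (OrderDual.toDual y), hgx, fun y z h ψ =>
      LinearMap.congr_fun (hg (OrderDual.toDual z) (OrderDual.toDual y) h) ψ⟩
  refine ⟨fun y => (Module.evalEquiv k (M.V y)).symm (g y), ?_, fun y z h => ?_⟩
  · exact (LinearEquiv.symm_apply_eq _).2 hgx
  · refine (LinearEquiv.eq_symm_apply _).2 (LinearMap.ext fun ψ => ?_)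
    calc ψ (M.map h ((Module.evalEquiv k (M.V y)).symm (g y)))
        = g y (ψ ∘ₗ M.map h) := Module.apply_evalEquiv_symm_apply k (M.V y) (ψ ∘ₗ M.map h) (g y)
      _ = g z ψ := hg y z h ψ

/-- The indices at which a vector `v` at index `x` is alive: below `x` those from which `v` comes,
above `x` those where the image of `v` is nonzero. It is the support of the interval summand that
`v` generates. -/
def lifespan {x : P} (v : M.V x) : Set P :=
  {y | (∃ h : y ≤ x, v ∈ LinearMap.range (M.map h)) ∨ ∃ h : x ≤ y, M.map h v ≠ 0}

variable {M} {x y : P} {v : M.V x}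

theorem mem_lifespan_iff_mem_range (h : y ≤ x) :
    y ∈ M.lifespan v ↔ v ∈ LinearMap.range (M.map h) := by
  refine ⟨?_, fun hv => .inl ⟨h, hv⟩⟩
  rintro (⟨_, hv⟩ | ⟨h', _⟩)
  · exact hv
  · exact ⟨M.map h' v, by rw [map_map_apply, map_self_apply]⟩

theorem mem_lifespan_iff_map_ne_zero (hv : v ≠ 0) (h : x ≤ y) :
    y ∈ M.lifespan v ↔ M.map h v ≠ 0 := by
  refine ⟨?_, fun hv => .inr ⟨h, hv⟩⟩
  rintro (⟨h', _⟩ | ⟨_, hy⟩)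
  · intro hy
    apply hv
    rw [← M.map_self_apply le_rfl v, ← M.map_map_apply h h', hy, map_zero]
  · exact hy

theorem self_mem_lifespan : x ∈ M.lifespan v :=
  .inl ⟨le_rfl, v, M.map_self_apply _ v⟩

theorem isConvex_lifespan [Std.Total (α := P) (· ≤ ·)] (hv : v ≠ 0) :
    IsConvex (M.lifespan v) := by
  intro p q r hpq hqr hp hr
  rcases total_of (· ≤ ·) q x with hqx | hxq
  · rw [mem_lifespan_iff_mem_range (hpq.trans hqx)] at hp
    exact (mem_lifespan_iff_mem_range hqx).2 (M.range_map_mono hpq hqx hp)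
  · rw [mem_lifespan_iff_map_ne_zero hv (hxq.trans hqr)] at hr
    exact (mem_lifespan_iff_map_ne_zero hv hxq).2 fun hq => hr (M.ker_map_mono hxq hqr hq)

end PersistenceModule

/-- The composition of morphisms of persistence modules. -/
def Hom.comp {L M N : PersistenceModule k P} (g : Hom M N) (f : Hom L M) : Hom L N where
  app x := g.app x ∘ₗ f.app x
  natural h := by
    rw [← LinearMap.comp_assoc, g.natural, LinearMap.comp_assoc, f.natural, LinearMap.comp_assoc]

theorem Hom.natural_apply {M N : PersistenceModule k P} (f : Hom M N) {x y : P} (h : x ≤ y)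
    (m : M.V x) : N.map h (f.app x m) = f.app y (M.map h m) :=
  LinearMap.congr_fun (f.natural h) m

/-- The kernel of a morphism of persistence modules, taken pointwise. -/
def Hom.ker {M N : PersistenceModule k P} (f : Hom M N) : PersistenceModule k P where
  V x := LinearMap.ker (f.app x)
  map h := (M.map h).restrict fun m hm => by
    rw [LinearMap.mem_ker] at hm ⊢
    rw [← f.natural_apply, hm, map_zero]
  map_refl x := LinearMap.ext fun m => Subtype.ext (M.map_self_apply le_rfl m.1)
  map_trans hxy hyz :=
    LinearMap.ext fun m => Subtype.ext (M.map_map_apply hxy hyz m.1).symm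

section DirectSum

variable {ι : Type} {N : ι → PersistenceModule k P} {M : PersistenceModule k P}

/-- The projection of a direct sum of persistence modules onto one of its members. -/
def Hom.proj (N : ι → PersistenceModule k P) (i : ι) : Hom (directSum N) (N i) where
  app x := (DFinsupp.lapply i : (Π₀ i, (N i).V x) →ₗ[k] (N i).V x)
  natural _ := rfl

theorem directSum_ext {x : P} {n n' : (directSum N).V x}
    (h : ∀ i, (Hom.proj N i).app x n = (Hom.proj N i).app x n') : n = n' :=
  DFinsupp.ext (β := fun i => (N i).V x) (f := n) (g := n') h

open Classical in
/-- The inclusion of a member of a family of persistence modules into their direct sum. -/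
noncomputable def Hom.single (N : ι → PersistenceModule k P) (i : ι) : Hom (N i) (directSum N) where
  app x := DFinsupp.lsingle (R := k) (M := fun i => (N i).V x) i
  natural h := LinearMap.ext fun n =>
    DFinsupp.mapRange_single (f := fun i => (N i).map h) (hf := fun _ => map_zero _) (b := n)

theorem directSum_hom_ext {V : Type*} [AddCommGroup V] [Module k V] {x : P}
    {f g : (directSum N).V x →ₗ[k] V}
    (h : ∀ i n, f ((Hom.single N i).app x n) = g ((Hom.single N i).app x n)) : f = g := by
  classical
  exact DFinsupp.lhom_ext (M := fun i => (N i).V x) h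

theorem Hom.proj_single_self {x : P} (i : ι) (n : (N i).V x) :
    (Hom.proj N i).app x ((Hom.single N i).app x n) = n := by
  classical
  exact DFinsupp.single_eq_same (β := fun i => (N i).V x)

theorem Hom.proj_single_of_ne {x : P} {i j : ι} (h : i ≠ j) (n : (N j).V x) :
    (Hom.proj N i).app x ((Hom.single N j).app x n) = 0 := by
  classical
  exact DFinsupp.single_eq_of_ne (β := fun i => (N i).V x) h

open Classical in
/-- The linear map out of a fibre of a direct sum of persistence modules induced by a family of
linear maps. -/
noncomputable def directSumLift {V : Type*} [AddCommGroup V] [Module k V] {x : P}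
    (f : ∀ i, (N i).V x →ₗ[k] V) : (directSum N).V x →ₗ[k] V :=
  DFinsupp.lsum k f

theorem directSumLift_single {V : Type*} [AddCommGroup V] [Module k V] {x : P}
    (f : ∀ i, (N i).V x →ₗ[k] V) (i : ι) (n : (N i).V x) :
    directSumLift f ((Hom.single N i).app x n) = f i n := by
  classical
  exact DFinsupp.lsum_single k f i n

/-- The morphism out of a direct sum induced by a family of morphisms. -/
noncomputable def Hom.fromDirectSum (f : ∀ i, Hom (N i) M) : Hom (directSum N) M where
  app x := directSumLift fun i => (f i).app x
  natural h := directSum_hom_ext fun i n => by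
    rw [LinearMap.comp_apply, LinearMap.comp_apply, (Hom.single N i).natural_apply,
      directSumLift_single, directSumLift_single, (f i).natural_apply]

theorem Hom.fromDirectSum_single (f : ∀ i, Hom (N i) M) {x : P} (i : ι) (n : (N i).V x) :
    (Hom.fromDirectSum f).app x ((Hom.single N i).app x n) = (f i).app x n :=
  directSumLift_single _ i n

/-- The morphism into a direct sum induced by a locally finite family of morphisms. -/
noncomputable def Hom.toDirectSum (f : ∀ i, Hom M (N i))
    (hf : ∀ x m, {i | (f i).app x m ≠ 0}.Finite) : Hom M (directSum N) where
  app x := toDFinsupp (fun i => (f i).app x) (hf x)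
  natural {x y} h := LinearMap.ext fun m => directSum_ext fun i => by
    change (N i).map h (toDFinsupp (fun i => (f i).app x) (hf x) m i) =
      toDFinsupp (fun i => (f i).app y) (hf y) (M.map h m) i
    rw [toDFinsupp_apply_apply, toDFinsupp_apply_apply, (f i).natural_apply]

theorem Hom.proj_toDirectSum (f : ∀ i, Hom M (N i))
    (hf : ∀ x m, {i | (f i).app x m ≠ 0}.Finite) {x : P} (m : M.V x) (i : ι) :
    (Hom.proj N i).app x ((Hom.toDirectSum f hf).app x m) = (f i).app x m :=
  toDFinsupp_apply_apply (fun i => (f i).app x) (hf x) m i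

end DirectSum

/-- A presentation of `N` as a direct summand of `M`: a morphism `N → M` with a left inverse. -/
structure Retract (N M : PersistenceModule k P) where
  incl : Hom N M
  retr : Hom M N
  retr_incl : ∀ x (n : N.V x), retr.app x (incl.app x n) = n

namespace Retract

variable {L N M : PersistenceModule k P}

/-- A direct summand of a direct summand is a direct summand. -/
def trans (d : Retract L N) (e : Retract N M) : Retract L M where
  incl := e.incl.comp d.incl
  retr := d.retr.comp e.retr
  retr_incl x l := (congrArg (d.retr.app x) (e.retr_incl x _)).trans (d.retr_incl x l)

theorem retr_sub_incl_retr (e : Retract N M) {x : P} (m : M.V x) :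
    e.retr.app x (m - e.incl.app x (e.retr.app x m)) = 0 := by
  rw [map_sub, e.retr_incl, sub_self]

/-- The direct summand complementary to a given one. -/
def compl (e : Retract N M) : Retract e.retr.ker M where
  incl :=
    { app x := (LinearMap.ker (e.retr.app x)).subtype
      natural _ := rfl }
  retr :=
    { app x := (LinearMap.id - e.incl.app x ∘ₗ e.retr.app x).codRestrict _ e.retr_sub_incl_retr
      natural {x y} h := LinearMap.ext fun m => Subtype.ext <| by
        change M.map h (m - e.incl.app x (e.retr.app x m)) =
          M.map h m - e.incl.app y (e.retr.app y (M.map h m))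
        rw [map_sub, e.incl.natural_apply, e.retr.natural_apply] }
  retr_incl x n := Subtype.ext <| by
    change n.1 - e.incl.app x (e.retr.app x n.1) = n.1
    rw [LinearMap.mem_ker.1 n.2, map_zero, sub_zero]

theorem compl_retr_incl (e : Retract N M) {x : P} (n : N.V x) :
    e.compl.retr.app x (e.incl.app x n) = 0 := Subtype.ext <| by
  change e.incl.app x n - e.incl.app x (e.retr.app x (e.incl.app x n)) = 0
  rw [e.retr_incl, sub_self]

/-- One half of orthogonality of two direct summands: the retraction onto the first kills the
second. -/
def Annihilates (d : Retract L M) (e : Retract N M) : Prop :=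
  ∀ x (n : N.V x), d.retr.app x (e.incl.app x n) = 0

variable {ι : Type} {N : ι → PersistenceModule k P} (e : ∀ i, Retract (N i) M)

theorem iSupIndep_range_incl (he : Pairwise fun i j => (e i).Annihilates (e j)) (x : P) :
    iSupIndep fun i => LinearMap.range ((e i).incl.app x) := by
  refine fun i => Submodule.disjoint_def.2 ?_
  rintro _ ⟨n, rfl⟩ hn
  have hker : ⨆ (j) (_ : j ≠ i), LinearMap.range ((e j).incl.app x) ≤
      LinearMap.ker ((e i).retr.app x) := by
    refine iSup₂_le fun j hj => ?_
    rintro _ ⟨n', rfl⟩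
    exact he hj.symm x n'
  rw [← (e i).retr_incl x n, hker hn, map_zero]

theorem finite_retr_ne_zero (he : Pairwise fun i j => (e i).Annihilates (e j)) {x : P}
    [FiniteDimensional k (M.V x)] (m : M.V x) : {i | (e i).retr.app x m ≠ 0}.Finite := by
  refine (WellFoundedGT.finite_ne_bot_of_iSupIndep (iSupIndep_range_incl e he x)).subset
    fun i hi hbot => hi ?_
  have hincl : (e i).incl.app x ((e i).retr.app x m) = 0 := by
    rw [LinearMap.range_eq_bot.1 hbot, LinearMap.zero_apply]
  rw [← (e i).retr_incl x ((e i).retr.app x m), hincl, map_zero]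

theorem toDirectSum_fromDirectSum (he : Pairwise fun i j => (e i).Annihilates (e j))
    (hfin : ∀ x m, {i | (e i).retr.app x m ≠ 0}.Finite) {x : P} (n : (PMod.directSum N).V x) :
    (Hom.toDirectSum (fun i => (e i).retr) hfin).app x
      ((Hom.fromDirectSum fun i => (e i).incl).app x n) = n := by
  suffices h : (Hom.toDirectSum (fun i => (e i).retr) hfin).app x ∘ₗ
      (Hom.fromDirectSum fun i => (e i).incl).app x = LinearMap.id from LinearMap.congr_fun h n
  refine directSum_hom_ext fun i n => directSum_ext fun j => ?_
  rw [LinearMap.comp_apply, Hom.proj_toDirectSum, Hom.fromDirectSum_single, LinearMap.id_apply]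
  obtain rfl | hji := eq_or_ne j i
  · rw [(e j).retr_incl, Hom.proj_single_self]
  · rw [Hom.proj_single_of_ne hji]
    exact he hji x n

/-- The direct sum of a locally finite family of pairwise orthogonal direct summands is a direct
summand. -/
noncomputable def directSum (he : Pairwise fun i j => (e i).Annihilates (e j))
    (hfin : ∀ x m, {i | (e i).retr.app x m ≠ 0}.Finite) : Retract (PMod.directSum N) M where
  incl := Hom.fromDirectSum fun i => (e i).incl
  retr := Hom.toDirectSum (fun i => (e i).retr) hfin
  retr_incl _ n := toDirectSum_fromDirectSum e he hfin n

theorem annihilates_trans_compl_directSum (he : Pairwise fun i j => (e i).Annihilates (e j))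
    (hfin : ∀ x m, {i | (e i).retr.app x m ≠ 0}.Finite)
    (f : Retract L (directSum e he hfin).retr.ker) (i : ι) :
    (e i).Annihilates (f.trans (directSum e he hfin).compl) := fun x l =>
  calc (e i).retr.app x (f.incl.app x l).1
      = (Hom.proj N i).app x ((directSum e he hfin).retr.app x (f.incl.app x l).1) :=
        (Hom.proj_toDirectSum (fun i => (e i).retr) hfin _ i).symm
    _ = 0 := by rw [LinearMap.mem_ker.1 (f.incl.app x l).2, map_zero]

theorem trans_compl_directSum_annihilates (he : Pairwise fun i j => (e i).Annihilates (e j))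
    (hfin : ∀ x m, {i | (e i).retr.app x m ≠ 0}.Finite)
    (f : Retract L (directSum e he hfin).retr.ker) (i : ι) :
    (f.trans (directSum e he hfin).compl).Annihilates (e i) := fun x n => by
  have hn : (directSum e he hfin).incl.app x ((Hom.single N i).app x n) = (e i).incl.app x n :=
    Hom.fromDirectSum_single _ i n
  change f.retr.app x ((directSum e he hfin).compl.retr.app x ((e i).incl.app x n)) = 0
  rw [← hn, compl_retr_incl, map_zero]

end Retract

theorem isomorphic_of_isZero_ker_retr {N M : PersistenceModule k P} (e : Retract N M)
    (h : IsZero e.retr.ker) : Isomorphic M N :=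
  ⟨e.retr, fun x => ⟨(injective_iff_map_eq_zero _).2 fun m hm =>
    congrArg Subtype.val (h x ⟨m, hm⟩), fun n => ⟨_, e.retr_incl x n⟩⟩⟩

/- A maximal family of pairwise orthogonal summands isomorphic to members of `C` exhausts `M`: a
member of `C` split off from the complement of their sum would enlarge the family. -/
theorem exists_isomorphic_directSum {κ : Type} {C : κ → PersistenceModule k P}
    (hC : ∀ i, ¬ IsZero (C i))
    (hsplit : ∀ N : PersistenceModule k P, (∀ x, FiniteDimensional k (N.V x)) → ¬ IsZero N →
      ∃ i, Nonempty (Retract (C i) N))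
    (M : PersistenceModule k P) (hM : ∀ x, FiniteDimensional k (M.V x)) :
    ∃ (ι : Type) (c : ι → κ), Isomorphic M (directSum fun i => C (c i)) := by
  obtain ⟨B, hB⟩ := zorn_subset {B : Set (Σ i, Retract (C i) M) |
    B.Pairwise fun b c => b.2.Annihilates c.2} fun 𝓑 h𝓑 hchain =>
      ⟨⋃₀ 𝓑, (Set.pairwise_sUnion hchain.directedOn).2 h𝓑, fun _ => Set.subset_sUnion_of_mem⟩
  let e (b : B) : Retract (C b.1.1) M := b.1.2
  have he : Pairwise fun b c => (e b).Annihilates (e c) :=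
    fun b c hbc => hB.prop b.2 c.2 (Subtype.coe_ne_coe.2 hbc)
  have hfin (x : P) (m : M.V x) : {b | (e b).retr.app x m ≠ 0}.Finite :=
    have := hM x
    Retract.finite_retr_ne_zero e he m
  refine ⟨B, fun b => b.1.1, isomorphic_of_isZero_ker_retr (Retract.directSum e he hfin) ?_⟩
  by_contra hker
  obtain ⟨i, ⟨f⟩⟩ := hsplit _ (fun x => have := hM x; inferInstanceAs
    (FiniteDimensional k (LinearMap.ker ((Retract.directSum e he hfin).retr.app x)))) hker
  let b₀ : Σ i, Retract (C i) M := ⟨i, f.trans (Retract.directSum e he hfin).compl⟩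
  have hb₀_ann : ∀ b ∈ B, b₀.2.Annihilates b.2 := fun b hb =>
    Retract.trans_compl_directSum_annihilates e he hfin f ⟨b, hb⟩
  have hann_b₀ : ∀ b ∈ B, b.2.Annihilates b₀.2 := fun b hb =>
    Retract.annihilates_trans_compl_directSum e he hfin f ⟨b, hb⟩
  have hb₀B : b₀ ∈ B := hB.mem_of_prop_insert <|
    Set.pairwise_insert.2 ⟨hB.prop, fun b hb _ => ⟨hb₀_ann b hb, hann_b₀ b hb⟩⟩
  exact hC i fun x n => (b₀.2.retr_incl x n).symm.trans (hb₀_ann b₀ hb₀B x n)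

section Interval

theorem mem_kMod {I : Set P} {y : P} {c : k} (h : y ∉ I → c = 0) : c ∈ kMod k I y := by
  by_cases hy : y ∈ I
  · rw [kMod, if_pos hy]
    exact Submodule.mem_top
  · rw [h hy]
    exact zero_mem _

theorem coe_intervalMap {I : Set P} {y z : P} (h : y ≤ z) (hz : z ∈ I) (c : kMod k I y) :
    (intervalMap k I h c : k) = c := by
  simp [intervalMap, hz]

theorem not_isZero_intervalModule {I : Set P} (hI : IsIntervalLin I) :
    ¬ IsZero (intervalModule k I hI.2) := fun h => by
  obtain ⟨x, hx⟩ := hI.1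
  exact one_ne_zero (congrArg Subtype.val (h x (kGen k hx)))

variable {I : Set P} (hI : IsConvex I) {M : PersistenceModule k P}

/-- The morphism out of an interval module `k_I` given by a compatible family of vectors that
vanish outside of `I`. -/
noncomputable def Hom.ofSection (s : ∀ y, M.V y) (hs_zero : ∀ y ∉ I, s y = 0)
    (hs : ∀ y ∈ I, ∀ (z : P) (h : y ≤ z), M.map h (s y) = s z) :
    Hom (intervalModule k I hI) M where
  app y := LinearMap.toSpanSingleton k (M.V y) (s y) ∘ₗ (kMod k I y).subtype
  natural {y z} h := LinearMap.ext fun (c : kMod k I y) => by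
    change M.map h ((c : k) • s y) = (intervalMap k I h c : k) • s z
    by_cases hy : y ∈ I
    · rw [map_smul, hs y hy z h]
      by_cases hz : z ∈ I
      · rw [coe_intervalMap h hz]
      · rw [hs_zero z hz, smul_zero, smul_zero]
    · rw [show c = 0 from Subtype.ext (kMod_coe_eq_zero k hy c), map_zero, Submodule.coe_zero,
        Submodule.coe_zero, zero_smul, zero_smul, map_zero]

/-- The morphism into an interval module `k_I` given by a compatible family of functionals that
vanish outside of `I`. -/
noncomputable def Hom.ofDual (g : ∀ y, Module.Dual k (M.V y)) (hg_zero : ∀ y ∉ I, g y = 0)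
    (hg : ∀ z ∈ I, ∀ (y : P) (h : y ≤ z), g z ∘ₗ M.map h = g y) :
    Hom M (intervalModule k I hI) where
  app y := (g y).codRestrict (kMod k I y) fun m => mem_kMod fun hy => by
    rw [hg_zero y hy, LinearMap.zero_apply]
  natural {y z} h := LinearMap.ext fun m => Subtype.ext <| by
    by_cases hz : z ∈ I
    · exact (coe_intervalMap h hz _).trans (LinearMap.congr_fun (hg z hz y h) m).symm
    · exact (kMod_coe_eq_zero k hz _).trans (kMod_coe_eq_zero k hz _).symm

theorem Hom.coe_app_kGen_eq (f : Hom (intervalModule k I hI) (intervalModule k I hI)) {y z : P}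
    (h : y ≤ z) (hy : y ∈ I) (hz : z ∈ I) :
    (f.app z (kGen k hz) : kMod k I z).1 = (f.app y (kGen k hy) : kMod k I y).1 := by
  have hgen : intervalMap k I h (kGen k hy) = kGen k hz := Subtype.ext (coe_intervalMap h hz _)
  rw [← hgen]
  exact (congrArg Subtype.val (f.natural_apply h (kGen k hy))).symm.trans (coe_intervalMap h hz _)

theorem Hom.app_eq_self [Std.Total (α := P) (· ≤ ·)]
    (f : Hom (intervalModule k I hI) (intervalModule k I hI)) {x : P} (hx : x ∈ I)
    (hfx : f.app x (kGen k hx) = kGen k hx) (y : P) (c : (intervalModule k I hI).V y) :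
    f.app y c = c := by
  change kMod k I y at c
  by_cases hy : y ∈ I
  · have hgen : f.app y (kGen k hy) = kGen k hy := Subtype.ext <| by
      calc (f.app y (kGen k hy) : kMod k I y).1
          = (f.app x (kGen k hx) : kMod k I x).1 :=
            (total_of (· ≤ ·) x y).elim (f.coe_app_kGen_eq hI · hx hy)
              fun h => (f.coe_app_kGen_eq hI h hy hx).symm
        _ = 1 := congrArg Subtype.val hfx
    have hc : c = c.1 • kGen k hy := Subtype.ext (mul_one c.1).symm
    rw [hc]
    exact (map_smul _ _ _).trans (congrArg _ hgen)
  · exact Subtype.ext ((kMod_coe_eq_zero k hy _).trans (kMod_coe_eq_zero k hy _).symm)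

end Interval

section Lifespan

variable [Std.Total (α := P) (· ≤ ·)] {M : PersistenceModule k P} {x : P} {v : M.V x}

theorem exists_section_lifespan (hM : ∀ x, FiniteDimensional k (M.V x)) (hv : v ≠ 0) :
    ∃ s : ∀ y, M.V y, s x = v ∧ (∀ y ∉ M.lifespan v, s y = 0) ∧
      ∀ y ∈ M.lifespan v, ∀ (z : P) (h : y ≤ z), M.map h (s y) = s z := by
  classical
  have hx : x ∈ M.lifespan v := M.self_mem_lifespan
  obtain ⟨s, hsx, hs⟩ : ∃ s : ∀ y : M.lifespan v, M.V y, s ⟨x, hx⟩ = v ∧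
      ∀ (y z : M.lifespan v) (h : y.1 ≤ z.1), M.map h (s y) = s z :=
    (restrict M (M.lifespan v)).exists_section (fun y => hM y) (x := ⟨x, hx⟩) v
      fun y h => (M.mem_lifespan_iff_mem_range h).1 y.2
  have hleave (y : M.lifespan v) (z : P) (h : y.1 ≤ z) (hz : z ∉ M.lifespan v) :
      M.map h (s y) = 0 := by
    have hxz : x ≤ z := (total_of (· ≤ ·) x z).resolve_right fun hzx => by
      have hy := (M.mem_lifespan_iff_mem_range (h.trans hzx)).1 y.2
      exact hz ((M.mem_lifespan_iff_mem_range hzx).2 (M.range_map_mono h hzx hy))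
    have hvz : M.map hxz v = 0 := not_not.1 (mt (M.mem_lifespan_iff_map_ne_zero hv hxz).2 hz)
    rcases total_of (· ≤ ·) x y.1 with hxy | hyx
    · rw [← hs ⟨x, hx⟩ y hxy, hsx, M.map_map_apply, hvz]
    · rw [← M.map_map_apply hyx hxz, hs y ⟨x, hx⟩ hyx, hsx, hvz]
  refine ⟨fun y => if hy : y ∈ M.lifespan v then s ⟨y, hy⟩ else 0, ?_, fun y hy => dif_neg hy,
    fun y hy z h => ?_⟩
  · exact (dif_pos hx).trans hsx
  · simp only [dif_pos hy]
    split_ifs with hz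
    · exact hs ⟨y, hy⟩ ⟨z, hz⟩ h
    · exact hleave ⟨y, hy⟩ z h hz

theorem exists_dual_lifespan (hv : v ≠ 0) {φ : Module.Dual k (M.V x)}
    (hker : ∀ (y : P) (h : x ≤ y), LinearMap.ker (M.map h) = ⊥ ∨ v ∈ LinearMap.ker (M.map h))
    (hrange : ∀ (y : P) (h : y ≤ x),
      v ∈ LinearMap.range (M.map h) ∨ LinearMap.range (M.map h) ≤ LinearMap.ker φ) :
    ∃ g : ∀ y, Module.Dual k (M.V y), g x = φ ∧ (∀ y ∉ M.lifespan v, g y = 0) ∧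
      ∀ z ∈ M.lifespan v, ∀ (y : P) (h : y ≤ z), g z ∘ₗ M.map h = g y := by
  classical
  have hx : x ∈ M.lifespan v := M.self_mem_lifespan
  obtain ⟨g, hgx, hg⟩ : ∃ g : ∀ y : M.lifespan v, Module.Dual k (M.V y), g ⟨x, hx⟩ = φ ∧
      ∀ (y z : M.lifespan v) (h : y.1 ≤ z.1), g z ∘ₗ M.map h = g y :=
    (restrict M (M.lifespan v)).exists_dual_extension (x := ⟨x, hx⟩) φ fun y h => by
      have hy := (M.mem_lifespan_iff_map_ne_zero hv h).1 y.2
      exact ((hker y h).resolve_right hy).trans_le bot_le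
  have henter (y : P) (z : M.lifespan v) (h : y ≤ z.1) (hy : y ∉ M.lifespan v) :
      g z ∘ₗ M.map h = 0 := by
    have hyx : y ≤ x := (total_of (· ≤ ·) y x).resolve_right fun hxy => by
      have hz := (M.mem_lifespan_iff_map_ne_zero hv (hxy.trans h)).1 z.2
      exact hy ((M.mem_lifespan_iff_map_ne_zero hv hxy).2 fun h0 => hz (M.ker_map_mono hxy h h0))
    have hφy : φ ∘ₗ M.map hyx = 0 := LinearMap.range_le_ker_iff.1 <|
      (hrange y hyx).resolve_left (mt (M.mem_lifespan_iff_mem_range hyx).2 hy)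
    rcases total_of (· ≤ ·) x z.1 with hxz | hzx
    · rw [M.map_trans hyx hxz, ← LinearMap.comp_assoc, hg ⟨x, hx⟩ z hxz, hgx, hφy]
    · rw [← hg z ⟨x, hx⟩ hzx, hgx, LinearMap.comp_assoc, ← M.map_trans h hzx, hφy]
  refine ⟨fun y => if hy : y ∈ M.lifespan v then g ⟨y, hy⟩ else 0, ?_, fun y hy => dif_neg hy,
    fun z hz y h => ?_⟩
  · exact (dif_pos hx).trans hgx
  · simp only [dif_pos hz]
    split_ifs with hy
    · exact hg ⟨y, hy⟩ ⟨z, hz⟩ h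
    · exact henter y ⟨z, hz⟩ h hy

theorem exists_retract_intervalModule (hM : ∀ x, FiniteDimensional k (M.V x)) (hne : ¬ IsZero M) :
    ∃ (I : Set P) (hI : IsIntervalLin I), Nonempty (Retract (intervalModule k I hI.2) M) := by
  obtain ⟨x, w, hw⟩ : ∃ x, ∃ w : M.V x, w ≠ 0 := by
    simpa only [IsZero, not_forall] using hne
  have := hM x
  have : Nontrivial (M.V x) := nontrivial_of_ne w 0 hw
  obtain ⟨v, hv, hker⟩ := exists_ne_zero_forall_eq_bot_or_mem (M.isChain_ker_map x)
  obtain ⟨φ, hφv, hrange⟩ := exists_dual_forall_mem_or_le_ker (M.isChain_range_map x) hv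
  have hI := M.isConvex_lifespan hv
  have hx : x ∈ M.lifespan v := M.self_mem_lifespan
  obtain ⟨s, hsx, hs_zero, hs⟩ := exists_section_lifespan hM hv
  obtain ⟨g, hgx, hg_zero, hg⟩ := exists_dual_lifespan hv (φ := φ)
    (fun y h => hker _ ⟨y, h, rfl⟩) fun y h => hrange _ ⟨y, h, rfl⟩
  let incl := Hom.ofSection hI s hs_zero hs
  let retr := Hom.ofDual hI g hg_zero hg
  have hgs : g x ((1 : k) • s x) = 1 := by rw [one_smul, hgx, hsx, hφv]
  have hretr_incl : (retr.comp incl).app x (kGen k hx) = kGen k hx := Subtype.ext hgs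
  exact ⟨M.lifespan v, ⟨⟨x, hx⟩, hI⟩, ⟨incl, retr, (retr.comp incl).app_eq_self hI hx hretr_incl⟩⟩

end Lifespan

end PMod

open PMod in
theorem stmt1_general {k : Type} [Field k] {S : Type} [Preorder S] [Std.Total (α := S) (· ≤ ·)]
    (M : PersistenceModule k S) (hfd : ∀ x, FiniteDimensional k (M.V x)) :
    ∃ (ι : Type) (I : ι → Set S) (hI : ∀ i, IsIntervalLin (I i)),
      Isomorphic M (directSum fun i => intervalModule k (I i) (hI i).2) := by
  obtain ⟨ι, c, hc⟩ := exists_isomorphic_directSum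
    (C := fun I : {I : Set S // IsIntervalLin I} => intervalModule k I.1 I.2.2)
    (fun I => not_isZero_intervalModule I.2)
    (fun N hN hne => by
      obtain ⟨I, hI, hr⟩ := exists_retract_intervalModule hN hne
      exact ⟨⟨I, hI⟩, hr⟩) M hfd
  exact ⟨ι, fun i => (c i).1, fun i => (c i).2, hc⟩

open PMod in
/-- Theorem 1.2: pointwise finite-dimensional persistence modules over a totally
ordered set decompose into interval modules. -/
theorem stmt1 {k : Type} [Field k] {S : Type} [LinearOrder S]
    (M : PersistenceModule k S) (hfd : ∀ x, FiniteDimensional k (M.V x)) :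
    ∃ (ι : Type) (I : ι → Set S) (hI : ∀ i, IsIntervalLin (I i)),
      Isomorphic M (directSum fun i => intervalModule k (I i) (hI i).2) :=
  stmt1_general M hfd
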